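/- Let k be a nonnegative integer with k ≥ 2 and let D : C^k(ℝ) → C(ℝ) be an operator satisfying the identity (★): D(f·g·h) − f·D(g·h) − g·D(f·h) − h·D(f·g) + f·g·D(h) + f·h·D(g) + g·h·D(f) = 0 for all f, g, h ∈ C^k(ℝ), and suppose D is isotropic, i.e. D∘τ_h = τ_h∘D for every h ∈ ℝ, where (τ_h f)(x) = f(x + h). Then there exist real constants c₀, c₁, c₂, d₀₀ such that D(f)(x) = c₀·f(x)·ln|f(x)| + c₁·f'(x) + c₂·f''(x) + d₀₀·f(x)·(ln|f(x)|)² for all f ∈ C^k(ℝ) and x ∈ ℝ, with the conventions 0·ln 0 = 0 and 0·(ln 0)² = 0. -/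

import Mathlib

/-!
On a nowhere vanishing function the identity becomes additive after taking logarithms.

The identity with constants gives `D 0 = 0` and `D (-f) = -D f`, and with a bump function as two of
the three factors it shows that `D f x` depends only on the germ of `f` at `x`. If `u` and `v` have
the same `k`-jet at `x₀`, the function equal to `u` left of `x₀` and to `v` right of it is still
`C^k`; since `D` maps into continuous functions, `D (exp u) x₀ = D (exp v) x₀`. With isotropy,
`D (exp u) x = exp (u x) * E (jet u x)` for a function `E` of the first `k + 1` entries of the jet
(`logSymbol`), and the identity turns into Fréchet's functional equation for `E`. Hence
`E p = A p + B p p` with `A` additive and `B` biadditive and symmetric, i.e. `E` is given by additive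
functions `a i` and biadditive functions `b i j` of the entries, a priori without any regularity.

Continuity of `x ↦ E (jet u x)` for smooth `u` only makes the lowest coefficients linear. The other
coefficients are determined through functions with a zero: for `f x = x * exp (s * x ^ m)` the
function `D f` is bounded near `0`, so `x * B (jet log x) (jet (s * x ^ m))` is bounded for
`0 < x ≤ 1`. The `i`-th derivative of `log` is a multiple of `x⁻¹ ^ i`, so at `x = 1 / (n * y)` the
additive functions pick up powers of the integer `n`, and letting `n → ∞` forces
`b i j = 0` as soon as `i ≥ 2`, and bilinearity for `i, j ≤ 1` (`scaling`). The same argument for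
`f x = x` gives `a i = 0` for `i ≥ 3`, `a 2 = b 1 1` (the cancellation in `f'' / f = u'' + u' ^ 2`)
and `b 0 1 = 0`. Thus `E p = c₀ p₀ + c₁ p₁ + c₂ (p₂ + p₁ ^ 2) + d p₀ ^ 2`, which is the asserted
formula where `f > 0`; it extends to `f < 0` by oddness and to zeros of `f` by continuity if they
are limits of points where `f ≠ 0`, by locality otherwise.
-/

open Filter Topology

/-! ### Gluing along a point with vanishing jet -/

/-- If the `n`-jet of `w` vanishes at `x₀`, replacing `w` by `0` on the left of `x₀` preserves `C^n`. -/
theorem contDiff_glue (n : ℕ) (x₀ : ℝ) : ∀ (w : ℝ → ℝ), ContDiff ℝ n w →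
    (∀ i ≤ n, iteratedDeriv i w x₀ = 0) →
    ContDiff ℝ n (fun x => if x ≤ x₀ then 0 else w x) := by
  have hcont : ∀ w : ℝ → ℝ, Continuous w → w x₀ = 0 →
      Continuous (fun x => if x ≤ x₀ then 0 else w x) := by
    intro w hw h0
    refine Continuous.if_le continuous_const hw continuous_id continuous_const ?_
    rintro x rfl
    exact h0.symm
  induction n with
  | zero =>
    intro w hw hz
    have h0 := hz 0 le_rfl
    simp only [iteratedDeriv_zero] at h0
    simp only [Nat.cast_zero, contDiff_zero] at hw ⊢
    exact hcont w hw h0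
  | succ n ih =>
    intro w hw hz
    have h0 := hz 0 (Nat.zero_le _)
    have h1 := hz 1 (by omega)
    simp only [iteratedDeriv_zero] at h0
    rw [iteratedDeriv_one] at h1
    have hdw : Differentiable ℝ w := hw.differentiable (by simp)
    have hder : ∀ x, HasDerivAt (fun x => if x ≤ x₀ then 0 else w x)
        (if x ≤ x₀ then 0 else deriv w x) x := by
      intro x
      rcases lt_trichotomy x x₀ with h | h | h
      · rw [if_pos h.le]
        refine (hasDerivAt_const x (0:ℝ)).congr_of_eventuallyEq ?_
        filter_upwards [Iio_mem_nhds h] with y hy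
        exact if_pos (le_of_lt hy)
      · subst h
        rw [if_pos le_rfl]
        have hl : HasDerivWithinAt (fun y => if y ≤ x then 0 else w y) 0 (Set.Iic x) x :=
          (hasDerivWithinAt_const x _ (0:ℝ)).congr (fun y hy => if_pos hy) (if_pos le_rfl)
        have hr : HasDerivWithinAt (fun y => if y ≤ x then 0 else w y) 0 (Set.Ici x) x := by
          have := (hdw x).hasDerivAt.hasDerivWithinAt (s := Set.Ici x)
          rw [h1] at this
          refine this.congr (fun y hy => ?_) (by simp [h0])
          rcases eq_or_lt_of_le (Set.mem_Ici.1 hy) with e | e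
          · subst e; simp [h0]
          · exact if_neg (not_le.2 e)
        have := hl.union hr
        rwa [Set.Iic_union_Ici, hasDerivWithinAt_univ] at this
      · rw [if_neg (not_le.2 h)]
        refine (hdw x).hasDerivAt.congr_of_eventuallyEq ?_
        filter_upwards [Ioi_mem_nhds h] with y hy
        exact if_neg (not_le.2 hy)
    push_cast at hw ⊢
    rw [contDiff_succ_iff_deriv] at hw ⊢
    refine ⟨fun x => (hder x).differentiableAt, by simp, ?_⟩
    rw [show deriv (fun x => if x ≤ x₀ then 0 else w x)
      = fun x => if x ≤ x₀ then 0 else deriv w x from funext fun x => (hder x).deriv]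
    refine ih _ hw.2.2 fun i hi => ?_
    have := hz (i+1) (by omega)
    rwa [iteratedDeriv_succ'] at this

/-! ### Isotropic operators, jets and Taylor polynomials -/

/-- `D` maps `C^k(ℝ)` into `C(ℝ)`, satisfies the identity (★) on `C^k(ℝ)` and commutes with shifts.
The operator is total on functions; its values outside `C^k(ℝ)` are arbitrary. -/
structure IsotropicStar (k : ℕ) (D : (ℝ → ℝ) → (ℝ → ℝ)) : Prop where
  map : ∀ f : ℝ → ℝ, ContDiff ℝ k f → Continuous (D f)
  star : ∀ f g h : ℝ → ℝ, ContDiff ℝ k f → ContDiff ℝ k g → ContDiff ℝ k h →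
      ∀ x : ℝ,
        D (fun y => f y * g y * h y) x
          - f x * D (fun y => g y * h y) x
          - g x * D (fun y => f y * h y) x
          - h x * D (fun y => f y * g y) x
          + f x * g x * D h x
          + f x * h x * D g x
          + g x * h x * D f x = 0
  iso : ∀ (h : ℝ) (f : ℝ → ℝ), ContDiff ℝ k f →
      ∀ x : ℝ, D (fun y => f (y + h)) x = D f (x + h)

/-- The sequence of all iterated derivatives of `u` at `x`. Only the entries of index at most `k` are
meaningful for `u` of class `C^k`, and only those enter the symbol of an operator. -/
noncomputable def jet (u : ℝ → ℝ) (x : ℝ) : ℕ → ℝ := fun i => iteratedDeriv i u x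

/-- The polynomial of degree at most `k` whose derivatives at `0` up to order `k` are `p 0, …, p k`. -/
noncomputable def jetPoly (k : ℕ) (p : ℕ → ℝ) (t : ℝ) : ℝ :=
  ∑ i ∈ Finset.range (k + 1), p i / (i.factorial : ℝ) * t ^ i

theorem contDiff_jetPoly (k : ℕ) (p : ℕ → ℝ) (n : WithTop ℕ∞) : ContDiff ℝ n (jetPoly k p) := by
  unfold jetPoly
  fun_prop

theorem iteratedDeriv_jetPoly (k : ℕ) (p : ℕ → ℝ) {i : ℕ} (hi : i ≤ k) :
    iteratedDeriv i (jetPoly k p) 0 = p i := by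
  unfold jetPoly
  rw [iteratedDeriv_fun_sum (fun j _ => by fun_prop)]
  rw [Finset.sum_eq_single i]
  · rw [iteratedDeriv_const_mul_field, iteratedDeriv_pow, Nat.descFactorial_self]
    have : (i.factorial : ℝ) ≠ 0 := by positivity
    simp; field_simp
  · intro j _ hj
    rw [iteratedDeriv_const_mul_field, iteratedDeriv_pow]
    rcases lt_or_gt_of_ne hj with h | h
    · rw [Nat.descFactorial_of_lt h]; simp
    · rw [zero_pow (by omega)]; simp
  · intro h
    exact absurd (Finset.mem_range.2 (by omega)) h

theorem jetPoly_add (k : ℕ) (p q : ℕ → ℝ) (t : ℝ) :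
    jetPoly k (p + q) t = jetPoly k p t + jetPoly k q t := by
  unfold jetPoly
  rw [← Finset.sum_add_distrib]
  refine Finset.sum_congr rfl fun i _ => ?_
  rw [Pi.add_apply]; ring

theorem jetPoly_zero (k : ℕ) (p : ℕ → ℝ) : jetPoly k p 0 = p 0 := by
  simpa using iteratedDeriv_jetPoly k p (Nat.zero_le k)

/-- Near a point where it is positive, a `C^k` function is the exponential of a `C^k` function
defined on the whole line. -/
theorem exists_eventually_eq_exp (k : ℕ) (f : ℝ → ℝ) (hf : ContDiff ℝ k f) (x₀ : ℝ)
    (h0 : 0 < f x₀) :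
    ∃ u : ℝ → ℝ, ContDiff ℝ k u ∧ f =ᶠ[𝓝 x₀] fun x => Real.exp (u x) := by
  have hopen : {x | 0 < f x} ∈ 𝓝 x₀ := hf.continuous.continuousAt.eventually (lt_mem_nhds h0)
  obtain ⟨r, hr, hrs⟩ := Metric.mem_nhds_iff.1 hopen
  let χ : ContDiffBump x₀ := ⟨r / 2, r, by positivity, by linarith⟩
  have hpos : ∀ x, 0 < χ x * f x + (1 - χ x) := by
    intro x
    by_cases hx : x ∈ Metric.ball x₀ r
    · have h1 : 0 < χ x := χ.pos_of_mem_ball hx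
      have h2 : 0 < f x := hrs hx
      have h3 : χ x ≤ 1 := χ.le_one
      have := mul_pos h1 h2
      linarith
    · have h1 : χ x = 0 := χ.zero_of_le_dist (not_lt.1 hx)
      simp [h1]
  refine ⟨fun x => Real.log (χ x * f x + (1 - χ x)), ?_, ?_⟩
  · exact ((χ.contDiff.mul hf).add (contDiff_const.sub χ.contDiff)).log fun x => (hpos x).ne'
  · filter_upwards [χ.eventuallyEq_one] with x hx
    rw [Real.exp_log (hpos x), hx]
    simp

/-! ### Oddness, locality and dependence on the jet -/

namespace IsotropicStar

variable {k : ℕ} {D : (ℝ → ℝ) → (ℝ → ℝ)}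

theorem apply_zero (H : IsotropicStar k D) (x : ℝ) : D (fun _ => 0) x = 0 := by
  have := H.star (fun _ => 0) (fun _ => 0) (fun _ => 0) contDiff_const contDiff_const
    contDiff_const x
  simpa using this

theorem apply_neg (H : IsotropicStar k D) {f : ℝ → ℝ} (hf : ContDiff ℝ k f) (x : ℝ) :
    D (fun y => -f y) x = -D f x := by
  have h1 := H.star (fun _ => 1) (fun _ => 1) (fun _ => 1) contDiff_const contDiff_const
    contDiff_const x
  have h2 := H.star (fun _ => -1) (fun _ => -1) (fun _ => -1) contDiff_const contDiff_const
    contDiff_const x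
  have h3 := H.star (fun _ => -1) (fun _ => -1) f contDiff_const contDiff_const hf x
  norm_num at h1 h2 h3
  have h4 : D (fun _ => -1) x = 0 := by linarith
  rw [h1, h4] at h3
  have h5 : D (fun y => f y) x = D f x := rfl
  linarith

theorem congr_of_eventuallyEq (H : IsotropicStar k D) {f g : ℝ → ℝ} (hf : ContDiff ℝ k f)
    (hg : ContDiff ℝ k g) {x : ℝ} (h : f =ᶠ[𝓝 x] g) : D f x = D g x := by
  obtain ⟨φ, hφs, -, hφ, -, hφx⟩ := exists_contDiff_tsupport_subset (E := ℝ) (n := k) h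
  have key : ∀ y, f y * φ y = g y * φ y := by
    intro y
    by_cases hy : φ y = 0
    · simp [hy]
    · rw [show f y = g y from hφs (subset_tsupport _ hy)]
  have hφ' : ContDiff ℝ k φ := hφ
  -- with `φ x = 1`, the identity for `f, φ, φ` expresses `D f x` through `f φ` and `φ`
  have h1 := H.star f φ φ hf hφ' hφ' x
  have h2 := H.star g φ φ hg hφ' hφ' x
  simp only [key, hφx, h.eq_of_nhds] at h1 h2
  linarith

theorem apply_of_eventually_zero (H : IsotropicStar k D) {f : ℝ → ℝ} (hf : ContDiff ℝ k f)
    {x : ℝ} (h : f =ᶠ[𝓝 x] fun _ => 0) : D f x = 0 := by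
  rw [H.congr_of_eventuallyEq hf contDiff_const h, H.apply_zero]

/-- `D (exp u) x₀` depends only on the `k`-jet of `u` at `x₀`: the function equal to `u` on the left
and `v` on the right of `x₀` is `C^k`, and `D` of its exponential is continuous at `x₀`. -/
theorem exp_congr_of_jet (H : IsotropicStar k D) {u v : ℝ → ℝ} (hu : ContDiff ℝ k u)
    (hv : ContDiff ℝ k v) {x₀ : ℝ} (h : ∀ i ≤ k, iteratedDeriv i u x₀ = iteratedDeriv i v x₀) :
    D (fun y => Real.exp (u y)) x₀ = D (fun y => Real.exp (v y)) x₀ := by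
  have hw : ContDiff ℝ k (v - u) := hv.sub hu
  have hgl := contDiff_glue k x₀ (v - u) hw (fun i hi => by
    rw [iteratedDeriv_sub (hv.contDiffAt.of_le (by exact_mod_cast hi))
      (hu.contDiffAt.of_le (by exact_mod_cast hi)), h i hi, sub_self])
  -- `u + g` is `u` on the left of `x₀` and `v` on the right
  set g : ℝ → ℝ := fun x => if x ≤ x₀ then 0 else (v - u) x with hg
  have hs : ContDiff ℝ k (fun y => Real.exp (u y + g y)) := (hu.add hgl).exp
  have hle : ∀ x < x₀, D (fun y => Real.exp (u y + g y)) x = D (fun y => Real.exp (u y)) x := by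
    intro x hx
    refine H.congr_of_eventuallyEq hs hu.exp ?_
    filter_upwards [Iio_mem_nhds hx] with y hy
    simp [hg, le_of_lt (Set.mem_Iio.1 hy)]
  have hge : ∀ x > x₀, D (fun y => Real.exp (u y + g y)) x = D (fun y => Real.exp (v y)) x := by
    intro x hx
    refine H.congr_of_eventuallyEq hs hv.exp ?_
    filter_upwards [Ioi_mem_nhds hx] with y hy
    simp [hg, not_le.2 (Set.mem_Ioi.1 hy)]
  have cs := (H.map _ hs).continuousAt (x := x₀)
  have cu := (H.map _ hu.exp).continuousAt (x := x₀)
  have cv := (H.map _ hv.exp).continuousAt (x := x₀)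
  have e1 : D (fun y => Real.exp (u y + g y)) x₀ = D (fun y => Real.exp (u y)) x₀ := by
    refine tendsto_nhds_unique (cs.tendsto.mono_left (nhdsWithin_le_nhds (s := Set.Iio x₀)))
      ((cu.tendsto.mono_left nhdsWithin_le_nhds).congr' ?_)
    filter_upwards [self_mem_nhdsWithin] with x hx
    exact (hle x hx).symm
  have e2 : D (fun y => Real.exp (u y + g y)) x₀ = D (fun y => Real.exp (v y)) x₀ := by
    refine tendsto_nhds_unique (cs.tendsto.mono_left (nhdsWithin_le_nhds (s := Set.Ioi x₀)))
      ((cv.tendsto.mono_left nhdsWithin_le_nhds).congr' ?_)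
    filter_upwards [self_mem_nhdsWithin] with x hx
    exact (hge x hx).symm
  rw [← e1, e2]

end IsotropicStar

/-! ### The symbol in logarithmic coordinates -/

/-- The value `E p` with `D (exp u) x = exp (u x) * E p` whenever `p` is the `k`-jet of `u` at `x`,
normalized at `x = 0` with `u` the Taylor polynomial of `p`. -/
noncomputable def logSymbol (k : ℕ) (D : (ℝ → ℝ) → (ℝ → ℝ)) (p : ℕ → ℝ) : ℝ :=
  D (fun t => Real.exp (jetPoly k p t)) 0 / Real.exp (p 0)

namespace IsotropicStar

variable {k : ℕ} {D : (ℝ → ℝ) → (ℝ → ℝ)}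

theorem apply_exp (H : IsotropicStar k D) {u : ℝ → ℝ} (hu : ContDiff ℝ k u) (x : ℝ) :
    D (fun y => Real.exp (u y)) x = Real.exp (u x) * logSymbol k D (jet u x) := by
  have h1 := H.iso x (fun y => Real.exp (u y)) hu.exp 0
  rw [zero_add] at h1
  have h2 := H.exp_congr_of_jet (u := fun y => u (y + x)) (v := jetPoly k (jet u x)) (x₀ := 0)
    (hu.comp (contDiff_id.add contDiff_const)) (contDiff_jetPoly _ _ _) (fun i hi => by
      rw [iteratedDeriv_jetPoly _ _ hi, iteratedDeriv_comp_add_const]; simp [jet])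
  rw [← h1, h2, logSymbol]
  have : jet u x 0 = u x := by simp [jet]
  rw [this]
  field_simp

/-- Here `Real.log ∘ f` need not be globally smooth; its jet at `x` is that of a smooth local logarithm. -/
theorem apply_of_pos (H : IsotropicStar k D) {f : ℝ → ℝ} (hf : ContDiff ℝ k f) {x : ℝ}
    (hx : 0 < f x) :
    D f x = f x * logSymbol k D (jet (fun y => Real.log (f y)) x) := by
  obtain ⟨u, hu, he⟩ := exists_eventually_eq_exp k f hf x hx
  rw [H.congr_of_eventuallyEq hf hu.exp he, H.apply_exp hu, ← he.eq_of_nhds]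
  congr 2
  funext i
  refine Filter.EventuallyEq.iteratedDeriv_eq i ?_
  filter_upwards [he] with y hy
  rw [hy, Real.log_exp]

theorem _root_.logSymbol_congr {p q : ℕ → ℝ} (h : ∀ i ≤ k, p i = q i) :
    logSymbol k D p = logSymbol k D q := by
  have : jetPoly k p = jetPoly k q := by
    funext t
    refine Finset.sum_congr rfl fun i hi => ?_
    rw [h i (by have := Finset.mem_range.1 hi; omega)]
  unfold logSymbol
  rw [this, h 0 (Nat.zero_le _)]

/-- Fréchet's functional equation: the third mixed difference of the symbol vanishes. -/
theorem logSymbol_frechet (H : IsotropicStar k D) (p q r : ℕ → ℝ) :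
    logSymbol k D (p + q + r) - logSymbol k D (q + r) - logSymbol k D (p + r)
      - logSymbol k D (p + q) + logSymbol k D p + logSymbol k D q + logSymbol k D r = 0 := by
  have hs := H.star (fun t => Real.exp (jetPoly k p t)) (fun t => Real.exp (jetPoly k q t))
    (fun t => Real.exp (jetPoly k r t)) (contDiff_jetPoly _ _ _).exp (contDiff_jetPoly _ _ _).exp
    (contDiff_jetPoly _ _ _).exp 0
  simp only [← Real.exp_add, ← jetPoly_add] at hs
  simp only [jetPoly_zero] at hs
  unfold logSymbol
  simp only [Pi.add_apply, Real.exp_add] at hs ⊢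
  have := Real.exp_pos (p 0)
  have := Real.exp_pos (q 0)
  have := Real.exp_pos (r 0)
  field_simp
  linear_combination hs

theorem continuous_logSymbol_jet (H : IsotropicStar k D) {u : ℝ → ℝ} (hu : ContDiff ℝ k u) :
    Continuous fun x => logSymbol k D (jet u x) := by
  have : (fun x => logSymbol k D (jet u x))
      = fun x => D (fun y => Real.exp (u y)) x / Real.exp (u x) := by
    funext x
    rw [H.apply_exp hu]
    field_simp
  rw [this]
  exact (H.map _ hu.exp).div hu.continuous.rexp fun x => Real.exp_ne_zero _

/-- This is the continuity of `D f` at the zero of `f x = x * exp (v x)`, read off on the right of `0`,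
where `log f = log + v`. -/
theorem bounded_logSymbol_log (H : IsotropicStar k D) {v : ℝ → ℝ} (hv : ContDiff ℝ ⊤ v) :
    ∃ C, ∀ x, 0 < x → x ≤ 1 → |x * logSymbol k D (jet Real.log x + jet v x)| ≤ C := by
  have hv' : ContDiff ℝ k v := hv.of_le le_top
  have hf : ContDiff ℝ k (fun x => x * Real.exp (v x)) := contDiff_id.mul hv'.exp
  have hc : ContinuousOn (fun x => D (fun x => x * Real.exp (v x)) x / Real.exp (v x))
      (Set.Icc 0 1) :=
    ((H.map _ hf).div hv.continuous.rexp fun x => (Real.exp_pos _).ne').continuousOn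
  obtain ⟨C, hC⟩ := isCompact_Icc.exists_bound_of_continuousOn hc
  refine ⟨C, fun x hx hx1 => ?_⟩
  have h1 := hC x ⟨hx.le, hx1⟩
  rw [H.apply_of_pos hf (mul_pos hx (Real.exp_pos _))] at h1
  have h2 : jet (fun y => Real.log (y * Real.exp (v y))) x = jet Real.log x + jet v x := by
    funext i
    have : (fun y => Real.log (y * Real.exp (v y))) =ᶠ[𝓝 x] fun y => Real.log y + v y := by
      filter_upwards [Ioi_mem_nhds hx] with y hy
      rw [Real.log_mul (ne_of_gt hy) (Real.exp_pos _).ne', Real.log_exp]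
    rw [jet, this.iteratedDeriv_eq,
      iteratedDeriv_fun_add (Real.contDiffAt_log.2 hx.ne') (hv.contDiffAt.of_le le_top)]
    rfl
  rw [h2, Real.norm_eq_abs] at h1
  refine le_of_eq_of_le (congrArg _ ?_) h1
  field_simp

end IsotropicStar

/-! ### Additive functions and the scaling argument -/

theorem linear_of_continuous (g : ℝ →+ ℝ) (hg : Continuous g) (z : ℝ) : g z = z * g 1 := by
  simpa using map_real_smul g hg z 1

theorem map_natCast_mul' (g : ℝ →+ ℝ) (n : ℕ) (z : ℝ) : g (n * z) = n * g z := by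
  simpa using g.map_nsmul n z

theorem linear_of_bounded (g : ℝ →+ ℝ) (C : ℝ) (h : ∀ y, 1 ≤ y → y ≤ 2 → |g y| ≤ C) (z : ℝ) :
    g z = z * g 1 := by
  -- the additive function `r` vanishes on integers, so it is periodic and globally bounded
  set r : ℝ →+ ℝ := g - AddMonoidHom.mulRight (g 1) with hr
  have hrz : ∀ y, r y = g y - y * g 1 := fun y => rfl
  have hr1 : r 1 = 0 := by rw [hrz]; ring
  have hrb : ∀ y, |r y| ≤ C + 2 * |g 1| := by
    intro y
    have hint : r (⌊y⌋ : ℝ) = 0 := by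
      have := r.map_zsmul ⌊y⌋ 1
      rwa [zsmul_one, hr1, smul_zero] at this
    have e : r y = r (Int.fract y + 1) := by
      rw [map_add, hr1, add_zero, ← Int.self_sub_floor, map_sub, hint, sub_zero]
    have h0 := Int.fract_nonneg y
    have h1 := (Int.fract_lt_one y).le
    rw [e, hrz]
    refine (abs_sub _ _).trans (add_le_add (h _ (by linarith) (by linarith)) ?_)
    rw [abs_mul]
    refine mul_le_mul_of_nonneg_right ?_ (abs_nonneg _)
    rw [abs_of_nonneg (by linarith)]
    linarith
  have h0 : r z = 0 := by
    by_contra hne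
    obtain ⟨n, hn⟩ := exists_nat_gt ((C + 2 * |g 1|) / |r z|)
    rw [div_lt_iff₀ (abs_pos.2 hne)] at hn
    have := hrb (n * z)
    rw [map_natCast_mul', abs_mul, Nat.abs_cast] at this
    linarith
  rw [hrz] at h0
  linarith

/-- A polynomial in `n` whose square is `O(n)` is constant. -/
theorem coeff_eq_zero_of_sq_le (K : ℕ) (c : ℕ → ℝ) (C : ℝ) (N : ℕ)
    (h : ∀ n : ℕ, N ≤ n → (∑ i ∈ Finset.range K, c i * (n : ℝ) ^ i) ^ 2 ≤ C * n) :
    ∀ i, 1 ≤ i → i < K → c i = 0 := by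
  intro i hi hiK
  set P : Polynomial ℝ := ∑ i ∈ Finset.range K, Polynomial.C (c i) * Polynomial.X ^ i with hP
  have hev : ∀ x : ℝ, P.eval x = ∑ i ∈ Finset.range K, c i * x ^ i := by
    intro x
    simp [hP, Polynomial.eval_finsetSum]
  have hco : P.coeff i = c i := by
    simp [hP, Polynomial.coeff_C_mul, Polynomial.coeff_X_pow, hiK]
  by_contra hne
  have hdeg : 1 ≤ P.natDegree := hi.trans (Polynomial.le_natDegree_of_ne_zero (by rwa [hco]))
  have hP0 : P ≠ 0 := by rintro h0; rw [h0] at hdeg; simp at hdeg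
  have hlt : (Polynomial.X : Polynomial ℝ).degree < (P ^ 2).degree := by
    rw [Polynomial.degree_X, Polynomial.degree_eq_natDegree (pow_ne_zero _ hP0),
      Polynomial.natDegree_pow]
    exact_mod_cast (by omega : 1 < 2 * P.natDegree)
  have ht := (Polynomial.abs_div_tendsto_atTop_atTop_of_degree_gt (P ^ 2) Polynomial.X hlt
    Polynomial.X_ne_zero).comp tendsto_natCast_atTop_atTop
  obtain ⟨n, hn1, hn2⟩ := ((ht.eventually_gt_atTop C).and (eventually_ge_atTop (N + 1))).exists
  have := h n (by omega)
  have hnpos : (0 : ℝ) < n := by exact_mod_cast (by omega : 0 < n)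
  simp only [Function.comp, Polynomial.eval_pow, Polynomial.eval_X, hev] at hn1
  rw [abs_of_nonneg (by positivity), lt_div_iff₀ hnpos] at hn1
  linarith

/-- The factor in `log^(i+1) x = logCoeff i * x⁻¹ ^ (i + 1)`. -/
noncomputable def logCoeff (i : ℕ) : ℝ := (-1) ^ i * (i.factorial : ℝ)

theorem logCoeff_ne_zero (i : ℕ) : logCoeff i ≠ 0 := by
  unfold logCoeff
  positivity

theorem jet_log_succ {x : ℝ} (i : ℕ) :
    jet Real.log x (i + 1) = logCoeff i * x⁻¹ ^ (i + 1) := by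
  rw [jet, iteratedDeriv_succ', Real.deriv_log', iteratedDeriv_eq_iterate]
  have := iter_deriv_inv i x
  rw [show (Inv.inv : ℝ → ℝ) = fun x => x⁻¹ from rfl] at this
  rw [this, logCoeff, show (-1 - (i:ℤ)) = -((i + 1 : ℕ) : ℤ) by push_cast; ring, zpow_neg,
    zpow_natCast, inv_pow]

theorem jet_log_zero (x : ℝ) : jet Real.log x 0 = Real.log x := rfl

theorem one_add_log_le {z : ℝ} (hz : 1 ≤ z) : (1 + Real.log z) ^ 2 ≤ 4 * z := by
  have hs : 0 < Real.sqrt z := Real.sqrt_pos.2 (by linarith)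
  have h1 := Real.log_le_sub_one_of_pos hs
  have h2 : Real.log z = 2 * Real.log (Real.sqrt z) := by
    rw [Real.log_sqrt (by linarith)]; ring
  have h3 := Real.log_nonneg hz
  have h4 := Real.sq_sqrt (show 0 ≤ z by linarith)
  nlinarith

/-- Suppose `x * (∑ i, g i (log^(i) x) + R x)` is bounded on `(0, 1]`, where `i` runs from `1` to `k`,
the `g i` are additive and `x * R x` grows at most logarithmically. At `x = 1 / (n * y)` the sum
becomes a polynomial in `n`, additivity giving `g i (n ^ i * z) = n ^ i * g i z`, and comparing growth
as `n → ∞` shows `g i = 0` for `i ≥ 2`. The function `g 1` is then locally bounded, hence linear. -/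
theorem scaling (k : ℕ) (g : ℕ → ℝ →+ ℝ) (R : ℝ → ℝ)
    (hR : ∃ C, ∀ x, 0 < x → x ≤ 1 → |x * R x| ≤ C * (1 + |Real.log x|))
    (h : ∃ C, ∀ x, 0 < x → x ≤ 1 →
      |x * (∑ i ∈ Finset.range k, g (i + 1) (logCoeff i * x⁻¹ ^ (i + 1)) + R x)| ≤ C) :
    (∀ i, 2 ≤ i → i ≤ k → ∀ z, g i z = 0) ∧ (1 ≤ k → ∀ z, g 1 z = z * g 1 1) := by
  obtain ⟨C₁, hC₁⟩ := hR
  obtain ⟨C₂, hC₂⟩ := h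
  set C := C₁ + |C₂| with hCdef
  have hb : ∀ x, 0 < x → x ≤ 1 →
      |x * ∑ i ∈ Finset.range k, g (i + 1) (logCoeff i * x⁻¹ ^ (i + 1))|
        ≤ C * (1 + |Real.log x|) := by
    intro x hx hx1
    have h1 := hC₁ x hx hx1
    have h2 := hC₂ x hx hx1
    have h3 := abs_sub (x * (∑ i ∈ Finset.range k, g (i + 1) (logCoeff i * x⁻¹ ^ (i + 1)) + R x))
      (x * R x)
    rw [← mul_sub, add_sub_cancel_right] at h3
    have h4 := abs_nonneg (Real.log x)
    have h5 := le_abs_self C₂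
    have h6 := mul_nonneg (abs_nonneg C₂) h4
    rw [hCdef]
    nlinarith
  have hvan : ∀ i, 2 ≤ i → i ≤ k → ∀ y, 0 < y → g i (logCoeff (i - 1) * y ^ i) = 0 := by
    intro i hi hik y hy
    obtain ⟨N, hN⟩ := exists_nat_gt (1 / y)
    rw [div_lt_iff₀ hy] at hN
    have := coeff_eq_zero_of_sq_le k (fun i => g (i + 1) (logCoeff i * y ^ (i + 1)))
      (4 * C ^ 2 * y ^ 3) N (fun n hn => ?_) (i - 1) (by omega) (by omega)
    · simpa [show i - 1 + 1 = i by omega] using this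
    · have hny : 1 ≤ (n : ℝ) * y := by
        have : (N : ℝ) ≤ n := by exact_mod_cast hn
        nlinarith
      have hn0 : (0:ℝ) < n := by
        by_contra hcon
        nlinarith
      -- take `x = 1 / (n * y)`, which lies in `(0, 1]`
      have h1 := hb ((n * y)⁻¹) (by positivity) (inv_le_one_of_one_le₀ hny)
      rw [Real.log_inv, abs_neg, abs_of_nonneg (Real.log_nonneg hny), inv_inv] at h1
      have h2 : (n * y)⁻¹ * ∑ i ∈ Finset.range k, g (i + 1) (logCoeff i * (n * y) ^ (i + 1))
          = y⁻¹ * ∑ i ∈ Finset.range k, g (i + 1) (logCoeff i * y ^ (i + 1)) * (n : ℝ) ^ i := by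
        rw [Finset.mul_sum, Finset.mul_sum]
        refine Finset.sum_congr rfl fun i _ => ?_
        have e : logCoeff i * (n * y) ^ (i + 1)
            = ((n ^ (i + 1) : ℕ) : ℝ) * (logCoeff i * y ^ (i + 1)) := by
          push_cast; ring
        rw [e, map_natCast_mul']
        push_cast
        field_simp
        ring
      rw [h2] at h1
      set S := ∑ i ∈ Finset.range k, g (i + 1) (logCoeff i * y ^ (i + 1)) * (n : ℝ) ^ i
      have h3 : (y⁻¹ * S) ^ 2 ≤ (C * (1 + Real.log (n * y))) ^ 2 := sq_le_sq' (by
        linarith [(abs_le.1 h1).1]) (abs_le.1 h1).2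
      have h4 := one_add_log_le hny
      have h5 : (y⁻¹ * S) ^ 2 ≤ C ^ 2 * (4 * (n * y)) := by
        rw [mul_pow C] at h3
        exact h3.trans (mul_le_mul_of_nonneg_left h4 (sq_nonneg _))
      have h6 : S ^ 2 = y ^ 2 * (y⁻¹ * S) ^ 2 := by field_simp
      calc S ^ 2 = y ^ 2 * (y⁻¹ * S) ^ 2 := h6
        _ ≤ y ^ 2 * (C ^ 2 * (4 * (n * y))) := mul_le_mul_of_nonneg_left h5 (sq_nonneg _)
        _ = _ := by ring
  have hzero : ∀ i, 2 ≤ i → i ≤ k → ∀ z, g i z = 0 := by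
    intro i hi hik
    have hκ := logCoeff_ne_zero (i - 1)
    have hpos : ∀ w, 0 < w → g i (logCoeff (i - 1) * w) = 0 := by
      intro w hw
      have := hvan i hi hik (w ^ ((i : ℝ)⁻¹)) (Real.rpow_pos_of_pos hw _)
      rwa [Real.rpow_inv_natCast_pow hw.le (by omega)] at this
    intro z
    rcases lt_trichotomy (z / logCoeff (i - 1)) 0 with h | h | h
    · have := hpos (-(z / logCoeff (i - 1))) (by linarith)
      rwa [mul_neg, mul_div_cancel₀ _ hκ, map_neg, neg_eq_zero] at this
    · rw [div_eq_zero_iff] at h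
      rw [h.resolve_right hκ, map_zero]
    · have := hpos _ h
      rwa [mul_div_cancel₀ _ hκ] at this
  refine ⟨hzero, fun hk z => ?_⟩
  refine linear_of_bounded (g 1) (2 * (|C| * (1 + Real.log 2))) (fun y hy1 hy2 => ?_) z
  have hy0 : 0 < y := by linarith
  have h1 := hb y⁻¹ (by positivity) (inv_le_one_of_one_le₀ hy1)
  rw [Finset.sum_eq_single_of_mem 0 (Finset.mem_range.2 hk) (fun i hi hi0 =>
    hzero (i + 1) (by omega) (by have := Finset.mem_range.1 hi; omega) _)] at h1
  rw [Real.log_inv, abs_neg, abs_of_nonneg (Real.log_nonneg hy1)] at h1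
  simp only [logCoeff, inv_inv, pow_zero, Nat.factorial_zero, Nat.cast_one, zero_add, pow_one,
    one_mul] at h1
  have h2 : Real.log y ≤ Real.log 2 := Real.log_le_log hy0 hy2
  have h3 := Real.log_nonneg hy1
  rw [abs_mul, abs_of_pos (by positivity : 0 < y⁻¹), inv_mul_le_iff₀ hy0] at h1
  refine h1.trans ?_
  have h4 : C * (1 + Real.log y) ≤ |C| * (1 + Real.log 2) :=
    mul_le_mul (le_abs_self C) (by linarith) (by linarith) (abs_nonneg _)
  have h5 : 0 ≤ |C| * (1 + Real.log 2) := mul_nonneg (abs_nonneg _) (by linarith)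
  exact (mul_le_mul_of_nonneg_left h4 hy0.le).trans (mul_le_mul_of_nonneg_right hy2 h5)

/-! ### Coefficients of the symbol -/

theorem jet_mul_pow (s : ℝ) (m : ℕ) (x : ℝ) (j : ℕ) :
    jet (fun y => s * y ^ m) x j = s * (m.descFactorial j * x ^ (m - j)) := by
  rw [jet, iteratedDeriv_const_mul_field, iteratedDeriv_pow]

theorem sum_range_succ_eq_two {k : ℕ} (hk : 1 ≤ k) (F : ℕ → ℝ)
    (hF : ∀ i, 2 ≤ i → i ≤ k → F i = 0) : ∑ i ∈ Finset.range (k + 1), F i = F 0 + F 1 := by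
  rw [← Finset.sum_subset (Finset.range_subset_range.2 (by omega : 2 ≤ k + 1))]
  · simp [Finset.sum_range_succ]
  · intro i hi hi2
    simp only [Finset.mem_range] at hi hi2
    exact hF i (by omega) (by omega)

theorem exists_bound_of_continuous (F : ℝ → ℝ) (hF : Continuous F) :
    ∃ C, ∀ x, 0 < x → x ≤ 1 → |F x| ≤ C * (1 + |Real.log x|) := by
  obtain ⟨C, hC⟩ := isCompact_Icc.exists_bound_of_continuousOn (hF.continuousOn (s := Set.Icc 0 1))
  refine ⟨C, fun x hx hx1 => (hC x ⟨hx.le, hx1⟩).trans ?_⟩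
  have h0 : 0 ≤ C := (norm_nonneg _).trans (hC x ⟨hx.le, hx1⟩)
  have := mul_nonneg h0 (abs_nonneg (Real.log x))
  linarith

/-- A crude bound; `4` comes from `(1 + log z) ^ 2 ≤ 4 * z` at `z = x⁻¹`. -/
theorem mul_log_sq_le {x : ℝ} (hx : 0 < x) (hx1 : x ≤ 1) : |x * Real.log x ^ 2| ≤ 4 := by
  have h1 := one_add_log_le (z := x⁻¹) ((one_le_inv₀ hx).2 hx1)
  have h2 := Real.log_nonpos hx.le hx1
  rw [Real.log_inv] at h1
  have h3 : Real.log x ^ 2 ≤ 4 * x⁻¹ := by nlinarith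
  rw [abs_of_nonneg (by positivity)]
  calc x * Real.log x ^ 2 ≤ x * (4 * x⁻¹) := mul_le_mul_of_nonneg_left h3 hx.le
    _ = 4 := by field_simp

/-
Throughout this section the symbol is `∑ i, a i (p i) + ∑ i, ∑ j, b i j (p i) (p j)`. The hypotheses
`contA` and `contB` express continuity of `D f` for `f = exp u`, and `bddB`, `bddE` its continuity at
the zero of `f x = x * exp (s * x ^ m)`.
-/
section core

variable {k : ℕ} (hk : 2 ≤ k) (a : ℕ → ℝ →+ ℝ) (b : ℕ → ℕ → ℝ →+ ℝ →+ ℝ)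
  (hsymm : ∀ i j s t, b i j s t = b j i t s)
  (contA : ∀ u : ℝ → ℝ, ContDiff ℝ ⊤ u →
    Continuous fun x => ∑ i ∈ Finset.range (k + 1), a i (jet u x i))
  (contB : ∀ u v : ℝ → ℝ, ContDiff ℝ ⊤ u → ContDiff ℝ ⊤ v →
    Continuous fun x => ∑ i ∈ Finset.range (k + 1), ∑ j ∈ Finset.range (k + 1),
      b i j (jet u x i) (jet v x j))
  (bddB : ∀ (s : ℝ) (m : ℕ), ∃ C, ∀ x, 0 < x → x ≤ 1 →
    |x * ∑ i ∈ Finset.range (k + 1), ∑ j ∈ Finset.range (k + 1),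
      b i j (jet Real.log x i) (jet (fun y => s * y ^ m) x j)| ≤ C)
  (bddE : ∃ C, ∀ x, 0 < x → x ≤ 1 →
    |x * (∑ i ∈ Finset.range (k + 1), a i (jet Real.log x i)
      + ∑ i ∈ Finset.range (k + 1), ∑ j ∈ Finset.range (k + 1),
      b i j (jet Real.log x i) (jet Real.log x j))| ≤ C)

include hk

include contA in
/-- From `u = id`: the sum in `contA` is `a 0 x + a 1 1`. -/
theorem a_zero_linear (z : ℝ) : a 0 z = z * a 0 1 := by
  refine linear_of_continuous _ ?_ z
  have h := contA (fun y => 1 * y ^ 1) (by fun_prop)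
  have e : ∀ x, a 0 x = ∑ i ∈ Finset.range (k + 1), a i (jet (fun y => 1 * y ^ 1) x i) - a 1 1 := by
    intro x
    rw [sum_range_succ_eq_two (by omega)]
    · simp only [jet_mul_pow]; simp
    · intro i hi _
      rw [jet_mul_pow, Nat.descFactorial_of_lt (by omega)]
      simp
  exact (h.sub continuous_const).congr fun x => (e x).symm

include hsymm contB in
/-- From `u` constant and `v = id`: the double sum in `contB` is `b 0 0 s x + b 0 1 s 1`. -/
theorem b_zero_zero (s t : ℝ) : b 0 0 s t = s * t * b 0 0 1 1 := by
  have key : ∀ s z, b 0 0 s z = z * b 0 0 s 1 := by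
    intro s z
    refine linear_of_continuous (b 0 0 s) ?_ z
    have h := contB (fun y => s * y ^ 0) (fun y => 1 * y ^ 1) (by fun_prop) (by fun_prop)
    refine (h.sub (continuous_const (y := b 0 1 s 1))).congr fun x => ?_
    rw [Pi.sub_apply, Finset.sum_eq_single_of_mem 0 (by simp),
      sum_range_succ_eq_two (k := k) (by omega)]
    · simp only [jet_mul_pow]; simp
    · intro i hi _
      rw [jet_mul_pow _ 1, Nat.descFactorial_of_lt (by omega)]
      simp
    · intro i _ hi
      simp only [jet_mul_pow _ 0]; simp [Nat.descFactorial_of_lt (Nat.pos_of_ne_zero hi)]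
  rw [key s t, hsymm, key 1 s]
  ring

include hsymm contB bddB in
/-- From `f x = x * exp s`: the first slot of `b i 0` is controlled by the scaling argument, its second
slot being constant. -/
theorem b_col_zero :
    (∀ i, 2 ≤ i → i ≤ k → ∀ z s, b i 0 z s = 0) ∧ ∀ z s, b 1 0 z s = z * b 1 0 1 s := by
  have key : ∀ s, (∀ i, 2 ≤ i → i ≤ k → ∀ z, (b i 0).flip s z = 0) ∧
      (1 ≤ k → ∀ z, (b 1 0).flip s z = z * (b 1 0).flip s 1) := by
    intro s
    refine scaling k (fun i => (b i 0).flip s) (fun x => b 0 0 (Real.log x) s) ?_ ?_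
    · obtain ⟨C, hC⟩ := exists_bound_of_continuous
        (fun x => (x * Real.log x) * (s * b 0 0 1 1)) (Real.continuous_mul_log.mul continuous_const)
      refine ⟨C, fun x hx hx1 => ?_⟩
      have := hC x hx hx1
      rw [b_zero_zero hk b hsymm contB]
      convert this using 2
      ring
    · obtain ⟨C, hC⟩ := bddB s 0
      refine ⟨C, fun x hx hx1 => ?_⟩
      refine le_of_eq_of_le ?_ (hC x hx hx1)
      congr 2
      rw [Finset.sum_range_succ']
      have e : ∀ i z, ∑ j ∈ Finset.range (k + 1), b i j z (jet (fun y => s * y ^ 0) x j)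
          = b i 0 z s := by
        intro i z
        rw [Finset.sum_eq_single_of_mem 0 (by simp)]
        · simp only [jet_mul_pow]; simp
        · intro j _ hj
          simp only [jet_mul_pow _ 0]; simp [Nat.descFactorial_of_lt (Nat.pos_of_ne_zero hj)]
      simp only [e, jet_log_succ, jet_log_zero, AddMonoidHom.flip_apply]
  exact ⟨fun i hi hik z s => (key s).1 i hi hik z, fun z s => (key s).2 (by omega) z⟩

include hsymm contB bddB in
/-- Linearity in the second slot is seen on `u = v = id`, where `B (jet u x) (jet v x)` is continuous in
`x` and equals `b 0 0 x x + 2 * b 1 0 1 x + b 1 1 1 1`. -/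
theorem b_one_zero (z s : ℝ) : b 1 0 z s = z * s * b 1 0 1 1 := by
  have h1 := (b_col_zero hk b hsymm contB bddB).2
  have h2 : b 1 0 1 s = s * b 1 0 1 1 := by
    refine linear_of_continuous (b 1 0 1) ?_ s
    have h := contB (fun y => 1 * y ^ 1) (fun y => 1 * y ^ 1) (by fun_prop) (by fun_prop)
    refine (((h.sub (continuous_const (y := b 1 1 1 1))).sub
      ((continuous_id.mul continuous_id).mul (continuous_const (y := b 0 0 1 1)))).mul
      (continuous_const (y := (1/2 : ℝ)))).congr fun x => ?_
    have z2 : ∀ j, 2 ≤ j → jet (fun y => (1:ℝ) * y ^ 1) x j = 0 := by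
      intro j hj
      rw [jet_mul_pow, Nat.descFactorial_of_lt (by omega)]
      simp
    have z0 : jet (fun y => (1:ℝ) * y ^ 1) x 0 = x := by simp only [jet_mul_pow]; simp
    have z1 : jet (fun y => (1:ℝ) * y ^ 1) x 1 = 1 := by simp only [jet_mul_pow]; simp
    simp only [Pi.sub_apply, Pi.mul_apply, id]
    rw [sum_range_succ_eq_two (k := k) (by omega), sum_range_succ_eq_two (k := k) (by omega),
      sum_range_succ_eq_two (k := k) (by omega), z0, z1, b_zero_zero hk b hsymm contB x x, hsymm 0 1]
    · ring
    · intro j hj _; rw [z2 j hj, map_zero]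
    · intro j hj _; rw [z2 j hj, map_zero]
    · intro j hj _
      refine Finset.sum_eq_zero fun l _ => ?_
      rw [z2 j hj, map_zero, AddMonoidHom.zero_apply]
  rw [h1, h2]
  ring

include hsymm contB bddB in
/-- From `f x = x * exp (s * x)`. -/
theorem b_col_one :
    (∀ i, 2 ≤ i → i ≤ k → ∀ z s, b i 1 z s = 0) ∧ ∀ z s, b 1 1 z s = z * b 1 1 1 s := by
  have h0 := (b_col_zero hk b hsymm contB bddB).1
  have key : ∀ s, (∀ i, 2 ≤ i → i ≤ k → ∀ z, (b i 1).flip s z = 0) ∧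
      (1 ≤ k → ∀ z, (b 1 1).flip s z = z * (b 1 1).flip s 1) := by
    intro s
    refine scaling k (fun i => (b i 1).flip s) (fun x => b 0 0 (Real.log x) (s * x)
      + b 0 1 (Real.log x) s + b 1 0 x⁻¹ (s * x)) ?_ ?_
    · obtain ⟨C, hC⟩ := exists_bound_of_continuous
        (fun x => (x * Real.log x) * (s * x * b 0 0 1 1) + (x * Real.log x) * (s * b 1 0 1 1)
          + s * x * b 1 0 1 1) (by have := Real.continuous_mul_log; fun_prop)
      refine ⟨C, fun x hx hx1 => ?_⟩
      have := hC x hx hx1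
      rw [b_zero_zero hk b hsymm contB, hsymm 0 1, b_one_zero hk b hsymm contB bddB s,
        b_one_zero hk b hsymm contB bddB x⁻¹]
      convert this using 2
      field_simp
    · obtain ⟨C, hC⟩ := bddB s 1
      refine ⟨C, fun x hx hx1 => ?_⟩
      refine le_of_eq_of_le ?_ (hC x hx hx1)
      congr 2
      rw [Finset.sum_range_succ']
      have e : ∀ i z, ∑ j ∈ Finset.range (k + 1), b i j z (jet (fun y => s * y ^ 1) x j)
          = b i 0 z (s * x) + b i 1 z s := by
        intro i z
        rw [sum_range_succ_eq_two (by omega)]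
        · simp only [jet_mul_pow]; simp
        · intro j hj _
          simp only [jet_mul_pow _ 1]; simp [Nat.descFactorial_of_lt (show 1 < j by omega)]
      simp only [e, jet_log_succ, jet_log_zero, AddMonoidHom.flip_apply, Finset.sum_add_distrib]
      rw [Finset.sum_eq_single_of_mem (f := fun i => b (i + 1) 0 (logCoeff i * x⁻¹ ^ (i + 1))
        (s * x)) 0 (Finset.mem_range.2 (by omega))
        (fun i hi hi0 => h0 (i + 1) (by omega) (by have := Finset.mem_range.1 hi; omega) _ _)]
      simp [logCoeff]
      ring
  exact ⟨fun i hi hik z s => (key s).1 i hi hik z, fun z s => (key s).2 (by omega) z⟩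

include hsymm contB bddB in
theorem b_one_one (z s : ℝ) : b 1 1 z s = z * s * b 1 1 1 1 := by
  have h1 := (b_col_one hk b hsymm contB bddB).2
  rw [h1, hsymm, h1 s]
  ring

include hsymm contB bddB in
/-- From `f x = x * exp (s * x ^ m)`, by induction on `m`: the columns below `m` are already known, the
`m`-th derivative of `s * x ^ m` is the constant `s * m!`, and the higher ones vanish. -/
theorem b_ge_two : ∀ m, m ≤ k → ∀ i, 2 ≤ i → i ≤ k → ∀ z s, b i m z s = 0 := by
  have H0 := (b_col_zero hk b hsymm contB bddB).1
  have H1 := (b_col_one hk b hsymm contB bddB).1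
  intro m
  induction m using Nat.strong_induction_on with
  | _ m ih =>
  intro hmk
  rcases (by omega : m = 0 ∨ m = 1 ∨ 2 ≤ m) with rfl | rfl | hm
  · exact H0
  · exact H1
  have key : ∀ s, (∀ i, 2 ≤ i → i ≤ k → ∀ z, (b i m).flip (s * m.factorial) z = 0) ∧
      (1 ≤ k → ∀ z, (b 1 m).flip (s * m.factorial) z
        = z * (b 1 m).flip (s * m.factorial) 1) := by
    intro s
    refine scaling k (fun i => (b i m).flip (s * m.factorial))
      (fun x => b 0 0 (Real.log x) (s * x ^ m) + b 0 1 (Real.log x) (s * (m * x ^ (m - 1)))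
      + (b 1 0 x⁻¹ (s * x ^ m) + b 1 1 x⁻¹ (s * (m * x ^ (m - 1))))) ?_ ?_
    · obtain ⟨C, hC⟩ := exists_bound_of_continuous
        (fun x => (x * Real.log x) * (s * x ^ m * b 0 0 1 1)
          + (x * Real.log x) * ((s * (m * x ^ (m - 1))) * b 1 0 1 1)
          + (s * x ^ m * b 1 0 1 1 + (s * (m * x ^ (m - 1))) * b 1 1 1 1))
          (by have := Real.continuous_mul_log; fun_prop)
      refine ⟨C, fun x hx hx1 => ?_⟩
      have := hC x hx hx1
      rw [b_zero_zero hk b hsymm contB, hsymm 0 1, b_one_zero hk b hsymm contB bddB (s * _),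
        b_one_zero hk b hsymm contB bddB x⁻¹, b_one_one hk b hsymm contB bddB]
      convert this using 2
      field_simp
    · obtain ⟨C, hC⟩ := bddB s m
      refine ⟨C, fun x hx hx1 => ?_⟩
      refine le_of_eq_of_le ?_ (hC x hx hx1)
      congr 2
      rw [Finset.sum_range_succ']
      have elow : ∀ i ≤ 1, ∀ z, ∑ j ∈ Finset.range (k + 1), b i j z (jet (fun y => s * y ^ m) x j)
          = b i 0 z (s * x ^ m) + b i 1 z (s * (m * x ^ (m - 1))) := by
        intro i hi z
        rw [sum_range_succ_eq_two (by omega)]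
        · simp only [jet_mul_pow]; simp
        · intro j hj hjk
          rw [hsymm]
          rcases (by omega : i = 0 ∨ i = 1) with rfl | rfl
          · exact H0 j hj hjk _ _
          · exact H1 j hj hjk _ _
      have ehigh : ∀ i, 2 ≤ i → i ≤ k → ∀ z,
          ∑ j ∈ Finset.range (k + 1), b i j z (jet (fun y => s * y ^ m) x j)
          = b i m z (s * m.factorial) := by
        intro i hi hik z
        rw [Finset.sum_eq_single_of_mem m (Finset.mem_range.2 (by omega))]
        · simp only [jet_mul_pow]; simp [Nat.descFactorial_self]
        · intro j hj hjm
          rcases lt_or_gt_of_ne hjm with h | h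
          · exact ih j h (by omega) i hi hik _ _
          · simp only [jet_mul_pow _ m]; simp [Nat.descFactorial_of_lt h]
      have e1 : ∀ i ∈ Finset.range k,
          ∑ j ∈ Finset.range (k + 1),
            b (i + 1) j (jet Real.log x (i + 1)) (jet (fun y => s * y ^ m) x j)
          = b (i + 1) m (logCoeff i * x⁻¹ ^ (i + 1)) (s * m.factorial)
            + if i = 0 then b 1 0 x⁻¹ (s * x ^ m) + b 1 1 x⁻¹ (s * (m * x ^ (m - 1))) else 0 := by
        intro i hi
        have hi' := Finset.mem_range.1 hi
        rw [jet_log_succ]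
        rcases Nat.eq_zero_or_pos i with rfl | hpos
        · rw [elow _ le_rfl, hsymm (0 + 1) m, H1 m hm hmk]
          simp [logCoeff]
        · rw [ehigh _ (by omega) (by omega), if_neg (by omega), add_zero]
      rw [Finset.sum_congr rfl e1, Finset.sum_add_distrib, Finset.sum_ite_eq',
        if_pos (Finset.mem_range.2 (by omega)), elow 0 (by omega), jet_log_zero]
      simp only [AddMonoidHom.flip_apply]
      ring
  intro i hi hik z s
  have := (key (s / m.factorial)).1 i hi hik z
  rwa [div_mul_cancel₀ _ (by positivity)] at this

include hsymm contB bddB in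
/-- The biadditive part is an ordinary quadratic form in the first two entries. -/
theorem b_sum (p q : ℕ → ℝ) :
    ∑ i ∈ Finset.range (k + 1), ∑ j ∈ Finset.range (k + 1), b i j (p i) (q j)
      = b 0 0 1 1 * (p 0 * q 0) + b 1 0 1 1 * (p 0 * q 1 + p 1 * q 0)
        + b 1 1 1 1 * (p 1 * q 1) := by
  have H := b_ge_two hk b hsymm contB bddB
  have e : ∀ i ≤ 1, ∑ j ∈ Finset.range (k + 1), b i j (p i) (q j)
      = b i 0 (p i) (q 0) + b i 1 (p i) (q 1) := by
    intro i hi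
    refine sum_range_succ_eq_two (by omega) _ fun j hj hjk => ?_
    rw [hsymm]
    exact H i (by omega) j hj hjk _ _
  rw [sum_range_succ_eq_two (by omega), e 0 (by omega), e 1 le_rfl,
    b_zero_zero hk b hsymm contB, hsymm 0 1, b_one_zero hk b hsymm contB bddB (q 1),
    b_one_zero hk b hsymm contB bddB (p 1), b_one_one hk b hsymm contB bddB]
  · ring
  · intro i hi hik
    exact Finset.sum_eq_zero fun j hj => H j (by have := Finset.mem_range.1 hj; omega) i hi hik _ _

include hsymm contA contB bddB bddE in
/-- The function `f x = x` determines the additive part. The `x⁻¹ ^ 2` terms of `E (jet log x)` are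
`a 2 (-x⁻¹ ^ 2) + b 1 1 1 1 * x⁻¹ ^ 2`, so `a 2` minus multiplication by `b 1 1 1 1` vanishes by the
scaling argument; then `x * E (jet log x)` contains `2 * b 1 0 1 1 * log x`, which is unbounded
unless `b 1 0 1 1 = 0`. -/
theorem core : ∃ c₀ c₁ c₂ d : ℝ, ∀ p : ℕ → ℝ,
    ∑ i ∈ Finset.range (k + 1), a i (p i)
      + ∑ i ∈ Finset.range (k + 1), ∑ j ∈ Finset.range (k + 1), b i j (p i) (p j)
      = c₀ * p 0 + c₁ * p 1 + c₂ * (p 2 + p 1 ^ 2) + d * p 0 ^ 2 := by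
  have hB := b_sum hk b hsymm contB bddB
  have ha0 := a_zero_linear hk a contA
  set α₀ := a 0 1
  set β₀ := b 0 0 1 1
  set β₁ := b 1 0 1 1
  set β₂ := b 1 1 1 1
  obtain ⟨C, hC⟩ := bddE
  have hlog1 : ∀ x, jet Real.log x 1 = x⁻¹ := fun x => by
    have := jet_log_succ (x := x) 0
    simpa [logCoeff] using this
  -- the correction by `β₂` at `i = 2` absorbs the term `β₂ * x⁻¹ ^ 2` of the quadratic part
  have key := scaling k (fun i => a i - if i = 2 then AddMonoidHom.mulLeft β₂ else 0)
    (fun x => α₀ * Real.log x + β₀ * Real.log x ^ 2 + 2 * β₁ * (Real.log x * x⁻¹)) ?_ ?_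
  · obtain ⟨h1, h2⟩ := key
    have ha1 : ∀ z, a 1 z = z * a 1 1 := by simpa using h2 (by omega)
    have ha2 : ∀ z, a 2 z = β₂ * z := by
      intro z
      have := h1 2 le_rfl hk z
      simpa [sub_eq_zero] using this
    have ha3 : ∀ i, 3 ≤ i → i ≤ k → ∀ z, a i z = 0 := by
      intro i hi hik z
      have := h1 i (by omega) hik z
      simpa [show i ≠ 2 by omega] using this
    have hA : ∀ p : ℕ → ℝ, ∑ i ∈ Finset.range (k + 1), a i (p i)
        = α₀ * p 0 + a 1 1 * p 1 + β₂ * p 2 := by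
      intro p
      rw [← Finset.sum_subset (Finset.range_subset_range.2 (by omega : 3 ≤ k + 1))]
      · simp only [Finset.sum_range_succ, Finset.sum_range_zero]
        rw [ha0, ha1, ha2]
        ring
      · intro i hi hi2
        simp only [Finset.mem_range] at hi hi2
        exact ha3 i (by omega) (by omega) _
    have hβ₁ : β₁ = 0 := by
      by_contra hne
      -- `M` bounds `2 * β₁ * log x` on `(0, 1]`; it is exceeded at `x = exp (-n)`
      set M := C + |α₀| + |a 1 1| + 4 * |β₀|
      obtain ⟨n, hn⟩ := exists_nat_gt (M / (2 * |β₁|))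
      rw [div_lt_iff₀ (by positivity)] at hn
      set x := Real.exp (-n) with hx
      have hx0 : 0 < x := Real.exp_pos _
      have hx1 : x ≤ 1 := Real.exp_le_one_iff.2 (by simp)
      have h3 := hC x hx0 hx1
      rw [hA, hB, jet_log_zero, hlog1, jet_log_succ 1] at h3
      have h4 := mul_log_sq_le hx0 hx1
      have h5 := Real.abs_log_mul_self_lt x hx0 hx1
      have e : 2 * β₁ * Real.log x = x * (α₀ * Real.log x + a 1 1 * x⁻¹
          + β₂ * (logCoeff 1 * x⁻¹ ^ (1 + 1)) + (β₀ * (Real.log x * Real.log x)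
          + β₁ * (Real.log x * x⁻¹ + x⁻¹ * Real.log x) + β₂ * (x⁻¹ * x⁻¹)))
          - α₀ * (Real.log x * x) - a 1 1 - β₀ * (x * Real.log x ^ 2) := by
        have hxx : x * x⁻¹ = 1 := mul_inv_cancel₀ hx0.ne'
        rw [show logCoeff 1 = -1 by simp [logCoeff]]
        linear_combination (-(2 * β₁ * Real.log x + a 1 1)) * hxx
      have h6 : |2 * β₁ * Real.log x| ≤ M := by
        rw [e]
        refine (abs_sub _ _).trans ?_
        refine (add_le_add_left ((abs_sub _ _).trans (add_le_add_left (abs_sub _ _) _)) _).trans ?_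
        rw [abs_mul α₀, abs_mul β₀]
        have := mul_le_mul_of_nonneg_left h4 (abs_nonneg β₀)
        have := mul_le_mul_of_nonneg_left h5.le (abs_nonneg α₀)
        linarith
      rw [abs_mul, abs_mul, hx, Real.log_exp, abs_neg, Nat.abs_cast, abs_two] at h6
      linarith
    refine ⟨α₀, a 1 1, β₂, β₀, fun p => ?_⟩
    rw [hA, hB, hβ₁]
    ring
  · refine ⟨|α₀| + 4 * |β₀| + 2 * |β₁|, fun x hx hx1 => ?_⟩
    have h4 := mul_log_sq_le hx hx1
    have h5 := Real.abs_log_mul_self_lt x hx hx1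
    have e : x * (α₀ * Real.log x + β₀ * Real.log x ^ 2 + 2 * β₁ * (Real.log x * x⁻¹))
        = α₀ * (Real.log x * x) + β₀ * (x * Real.log x ^ 2) + 2 * (β₁ * Real.log x) := by
      field_simp
    rw [e]
    refine (abs_add_three _ _ _).trans ?_
    rw [abs_mul α₀, abs_mul β₀, abs_mul 2, abs_mul β₁, abs_two]
    have := mul_le_mul_of_nonneg_left h4 (abs_nonneg β₀)
    have := mul_le_mul_of_nonneg_left h5.le (abs_nonneg α₀)
    have := abs_nonneg (Real.log x)
    have := mul_nonneg (abs_nonneg α₀) this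
    have := mul_nonneg (abs_nonneg β₀) (abs_nonneg (Real.log x))
    have := abs_nonneg β₁
    linarith
  · refine ⟨C, fun x hx hx1 => ?_⟩
    have h3 := hC x hx hx1
    rw [hB, jet_log_zero, hlog1, Finset.sum_range_succ', jet_log_zero, ha0] at h3
    refine le_of_eq_of_le ?_ h3
    congr 2
    have e1 : ∀ i ∈ Finset.range k, a (i + 1) (jet Real.log x (i + 1))
        = (fun i => a i - if i = 2 then AddMonoidHom.mulLeft β₂ else 0) (i + 1)
            (logCoeff i * x⁻¹ ^ (i + 1)) + if i = 1 then -(β₂ * x⁻¹ ^ 2) else 0 := by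
      intro i _
      rw [jet_log_succ]
      by_cases hi : i = 1
      · subst hi
        simp [logCoeff]
      · simp [hi]
    rw [Finset.sum_congr rfl e1, Finset.sum_add_distrib, Finset.sum_ite_eq',
      if_pos (Finset.mem_range.2 (by omega))]
    ring

end core

/-! ### Polarization of the symbol -/

theorem jet_add {u v : ℝ → ℝ} (hu : ContDiff ℝ ⊤ u) (hv : ContDiff ℝ ⊤ v) (x : ℝ) :
    jet (u + v) x = jet u x + jet v x := by
  funext i
  exact iteratedDeriv_add (hu.contDiffAt.of_le le_top) (hv.contDiffAt.of_le le_top)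

namespace IsotropicStar

variable {k : ℕ} {D : (ℝ → ℝ) → (ℝ → ℝ)}

theorem logSymbol_zero (H : IsotropicStar k D) : logSymbol k D 0 = 0 := by
  simpa using H.logSymbol_frechet 0 0 0

/-- The biadditive function `(p, q) ↦ (E (p + q) - E p - E q) / 2` attached to the symbol `E`;
biadditivity is Fréchet's equation. -/
noncomputable def polar (H : IsotropicStar k D) : (ℕ → ℝ) →+ (ℕ → ℝ) →+ ℝ :=
  AddMonoidHom.mk' (fun p => AddMonoidHom.mk'
    (fun q => (logSymbol k D (p + q) - logSymbol k D p - logSymbol k D q) / 2)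
    (fun q r => by
      have := H.logSymbol_frechet p q r
      rw [← add_assoc]
      linarith))
    (fun p q => by
      ext r
      have := H.logSymbol_frechet p q r
      simp only [AddMonoidHom.mk'_apply, AddMonoidHom.add_apply]
      linarith)

theorem polar_apply (H : IsotropicStar k D) (p q : ℕ → ℝ) :
    H.polar p q = (logSymbol k D (p + q) - logSymbol k D p - logSymbol k D q) / 2 := rfl

theorem polar_symm (H : IsotropicStar k D) (p q : ℕ → ℝ) : H.polar p q = H.polar q p := by
  rw [polar_apply, polar_apply, add_comm p q]
  ring

/-- The additive part `p ↦ E p - B p p` of the symbol `E`, with `B` its polar form. -/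
noncomputable def addPart (H : IsotropicStar k D) : (ℕ → ℝ) →+ ℝ :=
  AddMonoidHom.mk' (fun p => logSymbol k D p - H.polar p p) (fun p q => by
    have h := H.polar_apply p q
    have h2 := H.polar_symm p q
    simp only [map_add, AddMonoidHom.add_apply]
    linarith)

theorem logSymbol_eq (H : IsotropicStar k D) (p : ℕ → ℝ) :
    logSymbol k D p = H.addPart p + H.polar p p := by
  simp [addPart]

/-- Truncating a sequence to its entries of index at most `k` leaves those entries unchanged. -/
theorem trunc_apply (p : ℕ → ℝ) (i : ℕ) (hi : i ≤ k) :
    (∑ j ∈ Finset.range (k + 1), Pi.single j (p j)) i = p i := by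
  rw [Finset.sum_apply, Finset.sum_eq_single_of_mem i (Finset.mem_range.2 (by omega))]
  · simp
  · intro j _ hj
    exact Pi.single_eq_of_ne hj.symm _

theorem polar_eq_sum (H : IsotropicStar k D) (p q : ℕ → ℝ) :
    H.polar p q = ∑ i ∈ Finset.range (k + 1), ∑ j ∈ Finset.range (k + 1),
      H.polar (Pi.single i (p i)) (Pi.single j (q j)) := by
  have e : H.polar p q = H.polar (∑ j ∈ Finset.range (k + 1), Pi.single j (p j))
      (∑ j ∈ Finset.range (k + 1), Pi.single j (q j)) := by
    rw [polar_apply, polar_apply]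
    congr 1
    refine congrArg₂ _ (congrArg₂ _ ?_ ?_) ?_ <;> refine logSymbol_congr fun i hi => ?_
    · rw [Pi.add_apply, Pi.add_apply, trunc_apply p i hi, trunc_apply q i hi]
    · rw [trunc_apply p i hi]
    · rw [trunc_apply q i hi]
  rw [e, map_sum H.polar, AddMonoidHom.finsetSum_apply]
  exact Finset.sum_congr rfl fun i _ => map_sum _ _ _

theorem addPart_eq_sum (H : IsotropicStar k D) (p : ℕ → ℝ) :
    H.addPart p = ∑ i ∈ Finset.range (k + 1), H.addPart (Pi.single i (p i)) := by
  rw [← map_sum]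
  have h1 := H.logSymbol_eq p
  have h2 := H.logSymbol_eq (∑ j ∈ Finset.range (k + 1), Pi.single j (p j))
  have h3 := H.polar_eq_sum p p
  have h4 := H.polar_eq_sum (∑ j ∈ Finset.range (k + 1), Pi.single j (p j))
    (∑ j ∈ Finset.range (k + 1), Pi.single j (p j))
  have h5 : logSymbol k D p = logSymbol k D (∑ j ∈ Finset.range (k + 1), Pi.single j (p j)) :=
    logSymbol_congr fun i hi => (trunc_apply p i hi).symm
  have h6 : H.polar (∑ j ∈ Finset.range (k + 1), Pi.single j (p j))
      (∑ j ∈ Finset.range (k + 1), Pi.single j (p j)) = H.polar p p := by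
    rw [h3, h4]
    refine Finset.sum_congr rfl fun i hi => Finset.sum_congr rfl fun j hj => ?_
    rw [trunc_apply p i (by have := Finset.mem_range.1 hi; omega),
      trunc_apply p j (by have := Finset.mem_range.1 hj; omega)]
  linarith

theorem continuous_polar (H : IsotropicStar k D) {u v : ℝ → ℝ} (hu : ContDiff ℝ ⊤ u)
    (hv : ContDiff ℝ ⊤ v) : Continuous fun x => H.polar (jet u x) (jet v x) := by
  simp only [polar_apply, ← jet_add hu hv]
  exact (((H.continuous_logSymbol_jet ((hu.add hv).of_le le_top)).sub
    (H.continuous_logSymbol_jet (hu.of_le le_top))).sub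
    (H.continuous_logSymbol_jet (hv.of_le le_top))).div_const 2

theorem continuous_addPart (H : IsotropicStar k D) {u : ℝ → ℝ} (hu : ContDiff ℝ ⊤ u) :
    Continuous fun x => H.addPart (jet u x) := by
  refine ((H.continuous_logSymbol_jet (hu.of_le le_top)).sub (H.continuous_polar hu hu)).congr
    fun x => ?_
  rw [Pi.sub_apply, logSymbol_eq H]
  ring

theorem bounded_log (H : IsotropicStar k D) :
    ∃ C, ∀ x, 0 < x → x ≤ 1 → |x * logSymbol k D (jet Real.log x)| ≤ C := by
  obtain ⟨C, hC⟩ := H.bounded_logSymbol_log (v := fun _ => 0) contDiff_const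
  refine ⟨C, fun x hx hx1 => ?_⟩
  have := hC x hx hx1
  have h0 : jet (fun _ : ℝ => (0 : ℝ)) x = 0 := by
    funext i
    simp [jet]
  rwa [h0, add_zero] at this

/-- The product is half of `x * E (jet log x + jet v x) - x * E (jet log x) - x * E (jet v x)`, each
term of which is bounded. -/
theorem bounded_polar_log (H : IsotropicStar k D) {v : ℝ → ℝ} (hv : ContDiff ℝ ⊤ v) :
    ∃ C, ∀ x, 0 < x → x ≤ 1 → |x * H.polar (jet Real.log x) (jet v x)| ≤ C := by
  obtain ⟨C₁, hC₁⟩ := H.bounded_logSymbol_log hv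
  obtain ⟨C₂, hC₂⟩ := H.bounded_log
  obtain ⟨C₃, hC₃⟩ := isCompact_Icc.exists_bound_of_continuousOn
    ((continuous_id.mul (H.continuous_logSymbol_jet (u := v) (hv.of_le le_top))).continuousOn
      (s := Set.Icc 0 1))
  refine ⟨(C₁ + C₂ + C₃) / 2, fun x hx hx1 => ?_⟩
  have h1 := hC₁ x hx hx1
  have h2 := hC₂ x hx hx1
  have h3 := hC₃ x ⟨hx.le, hx1⟩
  simp only [Pi.mul_apply, id, Real.norm_eq_abs] at h3
  rw [abs_le] at h1 h2 h3 ⊢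
  rw [polar_apply]
  constructor <;> linarith [h1.1, h1.2, h2.1, h2.2, h3.1, h3.2]

/-- The coefficients are the restrictions of the additive and biadditive parts to single entries. -/
theorem exists_logSymbol_eq (H : IsotropicStar k D) (hk : 2 ≤ k) :
    ∃ c₀ c₁ c₂ d : ℝ, ∀ p : ℕ → ℝ,
      logSymbol k D p = c₀ * p 0 + c₁ * p 1 + c₂ * (p 2 + p 1 ^ 2) + d * p 0 ^ 2 := by
  let ι : ℕ → ℝ →+ (ℕ → ℝ) := fun i => AddMonoidHom.single (fun _ => ℝ) i
  let a : ℕ → ℝ →+ ℝ := fun i => H.addPart.comp (ι i)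
  let b : ℕ → ℕ → ℝ →+ ℝ →+ ℝ := fun i j => (H.polar.comp (ι i)).compl₂ (ι j)
  have ha : ∀ p : ℕ → ℝ, ∑ i ∈ Finset.range (k + 1), a i (p i) = H.addPart p :=
    fun p => (H.addPart_eq_sum p).symm
  have hb : ∀ p q : ℕ → ℝ, ∑ i ∈ Finset.range (k + 1), ∑ j ∈ Finset.range (k + 1),
      b i j (p i) (q j) = H.polar p q := fun p q => (H.polar_eq_sum p q).symm
  obtain ⟨c₀, c₁, c₂, d, h⟩ := core hk a b (fun i j s t => H.polar_symm _ _)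
    (fun u hu => by simpa only [ha] using H.continuous_addPart hu)
    (fun u v hu hv => by simpa only [hb] using H.continuous_polar hu hv)
    (fun s m => by
      simpa only [hb] using H.bounded_polar_log (v := fun y => s * y ^ m) (by fun_prop))
    (by simpa only [ha, hb, ← H.logSymbol_eq] using H.bounded_log)
  exact ⟨c₀, c₁, c₂, d, fun p => by rw [← h p, ha, hb, ← H.logSymbol_eq]⟩

end IsotropicStar

/-! ### The formula for the operator -/

theorem continuous_mul_log_abs : Continuous fun t : ℝ => t * Real.log |t| := by
  simpa only [Real.log_abs] using Real.continuous_mul_log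

theorem continuous_mul_log_abs_sq : Continuous fun t : ℝ => t * Real.log |t| ^ 2 := by
  have hc : Continuous fun t : ℝ => (Real.sqrt |t| * Real.log (Real.sqrt |t|)) ^ 2 :=
    (Real.continuous_mul_log.comp (Real.continuous_sqrt.comp continuous_abs)).pow 2
  rw [continuous_iff_continuousAt]
  intro t
  rcases eq_or_ne t 0 with rfl | ht
  · have h := (hc.tendsto 0).const_mul 4
    simp only [abs_zero, Real.sqrt_zero, zero_mul, ne_eq, OfNat.ofNat_ne_zero, not_false_eq_true,
      zero_pow, mul_zero] at h
    rw [ContinuousAt, zero_mul]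
    refine squeeze_zero_norm (fun t => le_of_eq ?_) h
    -- `|t| * log |t| ^ 2 = 4 * (√|t| * log √|t|) ^ 2`
    rw [Real.log_sqrt (abs_nonneg t), mul_pow, Real.sq_sqrt (abs_nonneg t), norm_mul, norm_pow,
      Real.norm_eq_abs, Real.norm_eq_abs, sq_abs]
    ring
  · have : |t| ≠ 0 := abs_ne_zero.2 ht
    exact continuousAt_id.mul ((continuous_abs.continuousAt.log this).pow 2)

/-- Substituting `u = log ∘ f`, `u' = f' / f` and `u'' + u' ^ 2 = f'' / f` in the symbol. -/
theorem formula_of_pos {k : ℕ} {D : (ℝ → ℝ) → (ℝ → ℝ)} (H : IsotropicStar k D) (hk : 2 ≤ k)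
    {c₀ c₁ c₂ d : ℝ} (hE : ∀ p : ℕ → ℝ,
      logSymbol k D p = c₀ * p 0 + c₁ * p 1 + c₂ * (p 2 + p 1 ^ 2) + d * p 0 ^ 2)
    {f : ℝ → ℝ} (hf : ContDiff ℝ k f) {x : ℝ} (hx : 0 < f x) :
    D f x = c₀ * f x * Real.log |f x| + c₁ * deriv f x + c₂ * deriv (deriv f) x
      + d * f x * (Real.log |f x|) ^ 2 := by
  have hf2 : ContDiff ℝ 2 f := hf.of_le (by exact_mod_cast hk)
  have hd : Differentiable ℝ f := hf2.differentiable (by norm_num)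
  have hd' : Differentiable ℝ (deriv f) :=
    ((contDiff_succ_iff_deriv (n := 1)).1 hf2).2.2.differentiable (by norm_num)
  have h1 : deriv (fun y => Real.log (f y)) =ᶠ[𝓝 x] fun y => deriv f y / f y := by
    filter_upwards [hd.continuous.continuousAt.eventually (lt_mem_nhds hx)] with y hy
    exact deriv.log (hd y) (ne_of_gt hy)
  have j0 : jet (fun y => Real.log (f y)) x 0 = Real.log (f x) := rfl
  have j1 : jet (fun y => Real.log (f y)) x 1 = deriv f x / f x := by
    rw [jet, iteratedDeriv_one, h1.eq_of_nhds]
  have j2 : jet (fun y => Real.log (f y)) x 2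
      = (deriv (deriv f) x * f x - deriv f x * deriv f x) / f x ^ 2 := by
    rw [jet, iteratedDeriv_succ, iteratedDeriv_one, h1.deriv_eq]
    exact deriv_fun_div (hd' x) (hd x) hx.ne'
  rw [H.apply_of_pos hf hx, hE, j0, j1, j2, Real.log_abs]
  field_simp
  ring

/-- (Isotropic solutions.) Let `k ≥ 2` and let `D : C^k(ℝ) → C(ℝ)` satisfy
the identity (★) and be isotropic (commute with all shift operators `τ_h`). Then there are
real constants `c₀, c₁, c₂, d₀₀` with
`D(f)(x) = c₀·f(x)·ln|f(x)| + c₁·f'(x) + c₂·f''(x) + d₀₀·f(x)·(ln|f(x)|)²` for all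
`f ∈ C^k(ℝ)` and `x ∈ ℝ` (the conventions `0·ln 0 = 0`, `0·(ln 0)² = 0` hold automatically
since `Real.log 0 = 0`). -/
theorem statement18 (k : ℕ) (hk : 2 ≤ k)
    (D : (ℝ → ℝ) → (ℝ → ℝ))
    (hmap : ∀ f : ℝ → ℝ, ContDiff ℝ k f → Continuous (D f))
    (hstar : ∀ f g h : ℝ → ℝ, ContDiff ℝ k f → ContDiff ℝ k g → ContDiff ℝ k h →
      ∀ x : ℝ,
        D (fun y => f y * g y * h y) x
          - f x * D (fun y => g y * h y) x
          - g x * D (fun y => f y * h y) x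
          - h x * D (fun y => f y * g y) x
          + f x * g x * D h x
          + f x * h x * D g x
          + g x * h x * D f x = 0)
    (hiso : ∀ (h : ℝ) (f : ℝ → ℝ), ContDiff ℝ k f →
      ∀ x : ℝ, D (fun y => f (y + h)) x = D f (x + h)) :
    ∃ c₀ c₁ c₂ d₀₀ : ℝ,
      ∀ f : ℝ → ℝ, ContDiff ℝ k f → ∀ x : ℝ,
        D f x = c₀ * f x * Real.log |f x| + c₁ * deriv f x + c₂ * deriv (deriv f) x
          + d₀₀ * f x * (Real.log |f x|) ^ 2 := by
  have H : IsotropicStar k D := ⟨hmap, hstar, hiso⟩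
  obtain ⟨c₀, c₁, c₂, d, hE⟩ := H.exists_logSymbol_eq hk
  refine ⟨c₀, c₁, c₂, d, fun f hf x => ?_⟩
  have hne : ∀ y, f y ≠ 0 → D f y = c₀ * f y * Real.log |f y| + c₁ * deriv f y
      + c₂ * deriv (deriv f) y + d * f y * (Real.log |f y|) ^ 2 := by
    intro y hy
    rcases lt_or_gt_of_ne hy with h | h
    · have h1 := formula_of_pos H hk hE hf.neg (x := y) (by simpa using h)
      have h2 := H.apply_neg hf y
      have h3 : deriv (fun z => -f z) = fun z => -deriv f z := by
        funext z
        simp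
      rw [h2, h3, deriv.fun_neg, abs_neg] at h1
      linarith
    · exact formula_of_pos H hk hE hf h
  by_cases hev : f =ᶠ[𝓝 x] fun _ => 0
  · have h1 : deriv f =ᶠ[𝓝 x] fun _ => 0 := by simpa using hev.deriv
    have h2 : deriv (deriv f) x = 0 := by simpa using h1.deriv_eq
    rw [H.apply_of_eventually_zero hf hev, hev.eq_of_nhds, h1.eq_of_nhds, h2]
    simp
  · have hf2 : ContDiff ℝ 2 f := hf.of_le (by exact_mod_cast hk)
    have hf1 := ((contDiff_succ_iff_deriv (n := 1)).1 hf2).2.2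
    have hc0 := hf2.continuous
    have hc2 : Continuous (deriv (deriv f)) := hf1.continuous_deriv le_rfl
    have hL := continuous_mul_log_abs.comp hc0
    have hL2 := continuous_mul_log_abs_sq.comp hc0
    have hR : Continuous fun y => c₀ * f y * Real.log |f y| + c₁ * deriv f y
        + c₂ * deriv (deriv f) y + d * f y * (Real.log |f y|) ^ 2 := by
      simp only [mul_assoc]
      exact (((hL.const_mul c₀).add (hf1.continuous.const_mul c₁)).add (hc2.const_mul c₂)).add
        (hL2.const_mul d)
    -- both sides are continuous and agree at points with `f y ≠ 0` arbitrarily close to `x`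
    have hcl : IsClosed {y | D f y = c₀ * f y * Real.log |f y| + c₁ * deriv f y
        + c₂ * deriv (deriv f) y + d * f y * (Real.log |f y|) ^ 2} :=
      isClosed_eq (hmap f hf) hR
    have hfr : ∃ᶠ y in 𝓝 x, f y ≠ 0 := not_eventually.1 hev
    exact hcl.mem_of_frequently_of_tendsto (hfr.mono hne) tendsto_id
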